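/- arXiv:2203.08248 — 11 statements merged into one kernel-verified Lean document; each statement's English description precedes it below -/
import Mathlib

section
/- Let α ∈ (0,1), let λ > 0, and let a : ℕ → ℝ satisfy 0 ≤ a i ≤ α^i for all i. Then for every natural number n, the series ∑'_{i : ℕ} a i / (λ + a i) converges and satisfies ∑'_{i} a i / (λ + a i) ≤ n + α^n / (λ·(1 − α)). -/
/-!
Each term `a i / (lam + a i)` is at most `1` and at most `α ^ i / lam`. The second bound gives
summability by comparison with a geometric series. Splitting the sum at `n`, the first bound
controls the first `n` terms and the second bounds the tail by the geometric tail
`α ^ n / (lam * (1 - α))`.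
-/

/-- geometric-decay intermediate inequality. -/
theorem stmt_1 (α : ℝ) (hα : α ∈ Set.Ioo (0 : ℝ) 1) (lam : ℝ) (hlam : 0 < lam)
    (a : ℕ → ℝ) (ha : ∀ i, 0 ≤ a i ∧ a i ≤ α ^ i) (n : ℕ) :
    Summable (fun i => a i / (lam + a i)) ∧
      ∑' i, a i / (lam + a i) ≤ (n : ℝ) + α ^ n / (lam * (1 - α)) := by
  obtain ⟨h0, h1⟩ := hα
  have hnonneg : ∀ i, 0 ≤ a i / (lam + a i) := fun i =>
    div_nonneg (ha i).1 (add_nonneg hlam.le (ha i).1)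
  have hone : ∀ i, a i / (lam + a i) ≤ 1 := fun i =>
    div_le_one_of_le₀ (by linarith) (add_nonneg hlam.le (ha i).1)
  have hgeom : ∀ i, a i / (lam + a i) ≤ α ^ i / lam := fun i =>
    div_le_div₀ (pow_nonneg h0.le i) (ha i).2 hlam (by linarith [(ha i).1])
  have hsum : Summable (fun i => a i / (lam + a i)) :=
    Summable.of_nonneg_of_le hnonneg hgeom
      ((summable_geometric_of_lt_one h0.le h1).div_const lam)
  refine ⟨hsum, ?_⟩
  have htail : HasSum (fun i => α ^ (i + n) / lam) (α ^ n / (lam * (1 - α))) := by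
    have h := (hasSum_geometric_of_lt_one h0.le h1).mul_left (α ^ n / lam)
    rw [← div_eq_mul_inv, div_div] at h
    have hfun : (fun i => α ^ (i + n) / lam) = fun i => α ^ n / lam * α ^ i := by
      funext i
      rw [pow_add]
      ring
    rw [hfun]
    exact h
  rw [← hsum.sum_add_tsum_nat_add n]
  refine add_le_add ?_ ?_
  · calc ∑ i ∈ Finset.range n, a i / (lam + a i) ≤ ∑ _i ∈ Finset.range n, (1 : ℝ) :=
          Finset.sum_le_sum fun i _ => hone i
      _ = n := by simp
  · rw [← htail.tsum_eq]
    exact ((summable_nat_add_iff n).2 hsum).tsum_le_tsum (fun i => hgeom (i + n)) htail.summable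
end

section
/- Let α ∈ (0,1), let a : ℕ → ℝ satisfy 0 ≤ a i ≤ α^i for all i, and let ε > 0 satisfy ε²·(1 − α) < 2. Then there exists λ > 0 such that ∑'_{i : ℕ} a i / (λ + a i) ≤ 2·(log(2/(ε²(1−α)))/log(1/α) + 1) and λ · ∑'_{i : ℕ} a i / (λ + a i) ≤ ε². -/
/-!
Each summand of `K(lam) = ∑' a i / (lam + a i)` is at most `1` and at most `α ^ i / lam`. Using the
first bound for `i < N` and the second for `i ≥ N` gives `K(lam) ≤ N + α ^ N / (lam * (1 - α))`.
With `n₀ = log (2 / (ε² (1 - α))) / log (1 / α)`, so that `α ^ n₀ = ε² (1 - α) / 2`, the choices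
`N = ⌈n₀⌉ ≤ n₀ + 1` and `lam = ε² / (2 (n₀ + 1))` make both terms at most `n₀ + 1`; hence
`K(lam) ≤ 2 (n₀ + 1)`, and multiplying by `lam` gives `lam * K(lam) ≤ ε²`.
-/

/-- Splitting the effective-dimension series at an arbitrary index `N`. -/
theorem tsum_div_add_le_of_le_pow {α : ℝ} (h0 : 0 < α) (h1 : α < 1) {a : ℕ → ℝ}
    (ha : ∀ i, 0 ≤ a i ∧ a i ≤ α ^ i) {lam : ℝ} (hl : 0 < lam) (N : ℕ) :
    ∑' i, a i / (lam + a i) ≤ N + α ^ N / (1 - α) / lam := by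
  have hnn : ∀ i, 0 ≤ a i / (lam + a i) := fun i =>
    div_nonneg (ha i).1 (add_nonneg hl.le (ha i).1)
  have hone : ∀ i, a i / (lam + a i) ≤ 1 := fun i => by
    have := (ha i).1
    rw [div_le_one (by linarith)]
    linarith
  have hpow : ∀ i, a i / (lam + a i) ≤ α ^ i / lam := fun i =>
    div_le_div₀ (pow_nonneg h0.le i) (ha i).2 hl (by linarith [(ha i).1])
  have hgeo : Summable fun i : ℕ => α ^ i / lam :=
    (summable_geometric_of_lt_one h0.le h1).div_const lam
  have hsum : Summable fun i => a i / (lam + a i) := Summable.of_nonneg_of_le hnn hpow hgeo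
  rw [← hsum.sum_add_tsum_nat_add N]
  refine add_le_add ?_ ?_
  · calc ∑ i ∈ Finset.range N, a i / (lam + a i) ≤ ∑ _i ∈ Finset.range N, (1 : ℝ) :=
          Finset.sum_le_sum fun i _ => hone i
      _ = N := by simp
  · calc ∑' i, a (i + N) / (lam + a (i + N)) ≤ ∑' i : ℕ, α ^ (i + N) / lam :=
          Summable.tsum_le_tsum (fun i => hpow (i + N))
            ((summable_nat_add_iff N).2 hsum) ((summable_nat_add_iff N).2 hgeo)
      _ = α ^ N / (1 - α) / lam := by
          simp_rw [pow_add]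
          rw [tsum_div_const, tsum_mul_right, tsum_geometric_of_lt_one h0.le h1,
            inv_mul_eq_div]

/-- geometric-decay case of Proposition 3.1. -/
theorem stmt_2 (α : ℝ) (hα : α ∈ Set.Ioo (0 : ℝ) 1)
    (a : ℕ → ℝ) (ha : ∀ i, 0 ≤ a i ∧ a i ≤ α ^ i)
    (ε : ℝ) (hε : 0 < ε) (hε2 : ε ^ 2 * (1 - α) < 2) :
    ∃ lam : ℝ, 0 < lam ∧
      (∑' i, a i / (lam + a i)) ≤
        2 * (Real.log (2 / (ε ^ 2 * (1 - α))) / Real.log (1 / α) + 1) ∧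
      lam * ∑' i, a i / (lam + a i) ≤ ε ^ 2 := by
  obtain ⟨h0, h1⟩ := hα
  have h1' : 0 < 1 - α := by linarith
  have hδ : 0 < ε ^ 2 * (1 - α) := by positivity
  have hL : 0 < Real.log (1 / α) := Real.log_pos (by rw [lt_div_iff₀ h0]; linarith)
  have hM : 0 < Real.log (2 / (ε ^ 2 * (1 - α))) :=
    Real.log_pos (by rw [lt_div_iff₀ hδ]; linarith)
  set n₀ := Real.log (2 / (ε ^ 2 * (1 - α))) / Real.log (1 / α) with hn₀
  have hn : 0 < n₀ := div_pos hM hL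
  have hN : α ^ ⌈n₀⌉₊ ≤ ε ^ 2 * (1 - α) / 2 := by
    have h := Nat.le_ceil n₀
    rw [hn₀, div_le_iff₀ hL, ← hn₀, ← Real.log_pow,
      Real.log_le_log_iff (by positivity) (by positivity), one_div, inv_pow,
      ← inv_div, inv_le_inv₀ (by positivity) (by positivity)] at h
    exact h
  have hlam : 0 < ε ^ 2 / (2 * (n₀ + 1)) := by positivity
  have htail : α ^ ⌈n₀⌉₊ / (1 - α) / (ε ^ 2 / (2 * (n₀ + 1))) ≤ n₀ + 1 := by
    rw [div_le_iff₀ hlam, div_le_iff₀ h1']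
    refine hN.trans (le_of_eq ?_)
    field_simp
  have hK : ∑' i, a i / (ε ^ 2 / (2 * (n₀ + 1)) + a i) ≤ 2 * (n₀ + 1) := by
    linarith [tsum_div_add_le_of_le_pow h0 h1 ha hlam ⌈n₀⌉₊, Nat.ceil_lt_add_one hn.le]
  refine ⟨ε ^ 2 / (2 * (n₀ + 1)), hlam, hK, ?_⟩
  refine (mul_le_mul_of_nonneg_left hK hlam.le).trans (le_of_eq ?_)
  field_simp
end

section
/- Let ι be a finite nonempty index type, p : ι → ℝ a probability weight function (p i ≥ 0 for all i and ∑ i, p i = 1), d ≥ 1, u ψ : ι → (Fin d → ℝ), and λ > 0. Let Σ = ∑ j, p j • (outer product of ψ j with itself) and K = trace((Σ + λ·I)⁻¹ * Σ). Then ∑ i, p i * ⟨u i, ψ i⟩ ≤ sqrt(K * ∑ i, ∑ j, p i * p j * ⟨u i, ψ j⟩²) + sqrt(λ * K * ∑ i, p i * ‖u i‖²), where ⟨·,·⟩ and ‖·‖ are the standard inner product and Euclidean norm on Fin d → ℝ. -/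
/-!
Write `A = S + lam • 1`, a positive definite matrix, with quadratic form
`v ⬝ᵥ A *ᵥ v = ∑ j, p j * (v ⬝ᵥ ψ j) ^ 2 + lam * (v ⬝ᵥ v)`. For every real `t`, the average over
`i` of this form at `u i - t • A⁻¹ *ᵥ ψ i` is nonnegative, and it equals `P - 2 t X + t² K`, where
`X` is the coupled expectation, `P` is the average of the form at `u i`, and `K = tr (A⁻¹ S)` is
the average of `ψ i ⬝ᵥ A⁻¹ *ᵥ ψ i`. Nonpositivity of the discriminant gives `X ^ 2 ≤ K * P`, and
subadditivity of the square root splits `K * P` into the two terms of the bound.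
-/

open Matrix

lemma quadForm_regularized {ι : Type*} [Fintype ι] {d : ℕ} (p : ι → ℝ) (ψ : ι → Fin d → ℝ)
    (lam : ℝ) (v : Fin d → ℝ) :
    v ⬝ᵥ ((∑ j, p j • vecMulVec (ψ j) (ψ j)) + lam • (1 : Matrix (Fin d) (Fin d) ℝ)) *ᵥ v =
      ∑ j, p j * (v ⬝ᵥ ψ j) ^ 2 + lam * (v ⬝ᵥ v) := by
  rw [add_mulVec, dotProduct_add, smul_mulVec, one_mulVec, dotProduct_smul, smul_eq_mul,
    sum_mulVec, dotProduct_sum]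
  congr 1
  refine Finset.sum_congr rfl fun j _ => ?_
  rw [smul_mulVec, dotProduct_smul, vecMulVec_mulVec, smul_eq_mul, op_smul_eq_smul,
    dotProduct_smul, smul_eq_mul, dotProduct_comm (ψ j) v, sq]

lemma regularized_posDef {ι : Type*} [Fintype ι] {d : ℕ} (p : ι → ℝ) (hp0 : ∀ i, 0 ≤ p i)
    (ψ : ι → Fin d → ℝ) {lam : ℝ} (hlam : 0 < lam) :
    ((∑ j, p j • vecMulVec (ψ j) (ψ j)) + lam • (1 : Matrix (Fin d) (Fin d) ℝ)).PosDef := by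
  refine PosDef.posSemidef_add (posSemidef_sum _ fun j _ => ?_) (PosDef.one.smul hlam)
  have h := posSemidef_vecMulVec_self_star (ψ j)
  rw [star_trivial] at h
  exact h.smul (hp0 j)

lemma trace_mul_sum_vecMulVec {ι : Type*} [Fintype ι] {d : ℕ} (p : ι → ℝ) (ψ : ι → Fin d → ℝ)
    (B : Matrix (Fin d) (Fin d) ℝ) :
    trace (B * ∑ j, p j • vecMulVec (ψ j) (ψ j)) = ∑ j, p j * (ψ j ⬝ᵥ B *ᵥ ψ j) := by
  rw [Matrix.mul_sum, trace_sum]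
  refine Finset.sum_congr rfl fun j _ => ?_
  rw [Matrix.mul_smul, trace_smul, mul_vecMulVec, trace_vecMulVec, smul_eq_mul, dotProduct_comm]

/-- Bellman-rank decoupling (finite dimensional content of Lemma E.1). -/
theorem stmt_7 {ι : Type*} [Fintype ι] [Nonempty ι]
    (p : ι → ℝ) (hp0 : ∀ i, 0 ≤ p i) (hp1 : ∑ i, p i = 1)
    (d : ℕ) (hd : 1 ≤ d) (u ψ : ι → Fin d → ℝ) (lam : ℝ) (hlam : 0 < lam)
    (S : Matrix (Fin d) (Fin d) ℝ)
    (hS : S = ∑ j, p j • Matrix.vecMulVec (ψ j) (ψ j))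
    (K : ℝ)
    (hK : K = Matrix.trace ((S + lam • (1 : Matrix (Fin d) (Fin d) ℝ))⁻¹ * S)) :
    ∑ i, p i * ∑ k, u i k * ψ i k ≤
      Real.sqrt (K * ∑ i, ∑ j, p i * p j * (∑ k, u i k * ψ j k) ^ 2) +
        Real.sqrt (lam * K * ∑ i, p i * ∑ k, u i k ^ 2) := by
  have hA : (S + lam • (1 : Matrix (Fin d) (Fin d) ℝ)).PosDef := by
    rw [hS]; exact regularized_posDef p hp0 ψ hlam
  have hq : ∀ v, v ⬝ᵥ (S + lam • (1 : Matrix (Fin d) (Fin d) ℝ)) *ᵥ v =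
      ∑ j, p j * (v ⬝ᵥ ψ j) ^ 2 + lam * (v ⬝ᵥ v) := by
    rw [hS]; exact quadForm_regularized p ψ lam
  generalize S + lam • (1 : Matrix (Fin d) (Fin d) ℝ) = A at hA hq hK
  have hAnn : ∀ v, 0 ≤ v ⬝ᵥ A *ᵥ v := fun v => by
    simpa using hA.posSemidef.dotProduct_mulVec_nonneg v
  have hAinv : ∀ v, A *ᵥ (A⁻¹ *ᵥ v) = v := fun v => by
    rw [mulVec_mulVec, mul_nonsing_inv A hA.det_pos.ne'.isUnit, one_mulVec]
  have hsymm : ∀ v w, v ⬝ᵥ A *ᵥ w = w ⬝ᵥ A *ᵥ v := fun v w => by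
    have hT : Aᵀ = A := by simpa using hA.isHermitian.eq
    rw [dotProduct_mulVec, ← mulVec_transpose, hT, dotProduct_comm]
  have hKsum : K = ∑ i, p i * (ψ i ⬝ᵥ A⁻¹ *ᵥ ψ i) := by
    rw [hK, hS, trace_mul_sum_vecMulVec]
  have hK0 : 0 ≤ K := by
    rw [hKsum]
    refine Finset.sum_nonneg fun i _ => mul_nonneg (hp0 i) ?_
    have h := hAnn (A⁻¹ *ᵥ ψ i)
    rwa [hAinv, dotProduct_comm] at h
  have hquad : ∀ t : ℝ, 0 ≤ K * (t * t) + (-2 * ∑ i, p i * (u i ⬝ᵥ ψ i)) * t +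
      ∑ i, p i * (u i ⬝ᵥ A *ᵥ u i) := fun t => by
    have h : 0 ≤ ∑ i, p i * ((u i - t • A⁻¹ *ᵥ ψ i) ⬝ᵥ A *ᵥ (u i - t • A⁻¹ *ᵥ ψ i)) :=
      Finset.sum_nonneg fun i _ => mul_nonneg (hp0 i) (hAnn _)
    refine h.trans_eq ?_
    rw [hKsum, Finset.mul_sum, Finset.sum_mul, Finset.sum_mul, ← Finset.sum_add_distrib,
      ← Finset.sum_add_distrib]
    refine Finset.sum_congr rfl fun i _ => ?_
    have h2 := hsymm (A⁻¹ *ᵥ ψ i) (u i)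
    rw [hAinv] at h2
    simp only [mulVec_sub, mulVec_smul, hAinv, sub_dotProduct, dotProduct_sub, smul_dotProduct,
      dotProduct_smul, smul_eq_mul, h2, dotProduct_comm (A⁻¹ *ᵥ ψ i) (ψ i)]
    ring
  have hdisc := discrim_le_zero hquad
  have hP : ∑ i, p i * (u i ⬝ᵥ A *ᵥ u i) =
      ∑ i, ∑ j, p i * p j * (∑ k, u i k * ψ j k) ^ 2 + lam * ∑ i, p i * ∑ k, u i k ^ 2 := by
    rw [Finset.mul_sum, ← Finset.sum_add_distrib]
    refine Finset.sum_congr rfl fun i _ => ?_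
    rw [hq, mul_add, Finset.mul_sum]
    simp only [dotProduct, sq, mul_assoc, mul_left_comm]
  change ∑ i, p i * (u i ⬝ᵥ ψ i) ≤ _
  rw [hP, discrim] at hdisc
  have hQ₁ : 0 ≤ ∑ i, ∑ j, p i * p j * (∑ k, u i k * ψ j k) ^ 2 :=
    Finset.sum_nonneg fun i _ => Finset.sum_nonneg fun j _ =>
      mul_nonneg (mul_nonneg (hp0 i) (hp0 j)) (sq_nonneg _)
  have hQ₂ : 0 ≤ ∑ i, p i * ∑ k, u i k ^ 2 :=
    Finset.sum_nonneg fun i _ => mul_nonneg (hp0 i) (Finset.sum_nonneg fun k _ => sq_nonneg _)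
  have hx : 0 ≤ K * ∑ i, ∑ j, p i * p j * (∑ k, u i k * ψ j k) ^ 2 := by positivity
  have hy : 0 ≤ lam * K * ∑ i, p i * ∑ k, u i k ^ 2 := by positivity
  refine le_of_abs_le (abs_le_of_sq_le_sq ?_ (by positivity))
  rw [add_sq, Real.sq_sqrt hx, Real.sq_sqrt hy]
  have hcross := mul_nonneg (Real.sqrt_nonneg (K * ∑ i, ∑ j, p i * p j * (∑ k, u i k * ψ j k) ^ 2))
    (Real.sqrt_nonneg (lam * K * ∑ i, p i * ∑ k, u i k ^ 2))
  linarith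
end

section
/- Let ι be a finite nonempty index type, p : ι → ℝ a probability weight function (p i ≥ 0 for all i and ∑ i, p i = 1), d ≥ 1, w φ : ι → (Fin d → ℝ), and λ > 0. Let Σ = ∑ j, p j • (outer product of φ j with itself) and K = trace((Σ + λ·I)⁻¹ * Σ). Then ∑ i, p i * |⟨w i, φ i⟩| ≤ sqrt((∑ i, ∑ j, p i * p j * ⟨w i, φ j⟩² + λ * ∑ i, p i * ‖w i‖²) * K), where ⟨·,·⟩ and ‖·‖ are the standard inner product and Euclidean norm on Fin d → ℝ. -/
/-!
Put `A = S + lam • 1`, which is positive definite. The Cauchy–Schwarz inequality for the inner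
product defined by `A` gives `|⟨w i, φ i⟩| ≤ √(w iᵀ A w i) * √(φ iᵀ A⁻¹ φ i)`, and the
Cauchy–Schwarz inequality for the weights `p` then bounds the left-hand side by
`√(∑ p i * w iᵀ A w i) * √(∑ p i * φ iᵀ A⁻¹ φ i)`. Expanding `A` in the first factor yields the
double sum plus the ridge term, and linearity of the trace identifies the second factor with `K`.
-/

open Matrix in
/-- Cauchy–Schwarz in the pair of dual norms given by `A` and `A⁻¹`. -/
lemma dotProduct_sq_le_of_posDef {n : Type*} [Fintype n] [DecidableEq n] {A : Matrix n n ℝ}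
    (hA : A.PosDef) (x y : n → ℝ) :
    (x ⬝ᵥ y) ^ 2 ≤ (x ⬝ᵥ A *ᵥ x) * (y ⬝ᵥ A⁻¹ *ᵥ y) := by
  have hdet : IsUnit A.det := (Matrix.isUnit_iff_isUnit_det A).1 hA.isUnit
  have hAu : A *ᵥ (A⁻¹ *ᵥ y) = y := by
    rw [mulVec_mulVec, mul_nonsing_inv _ hdet, one_mulVec]
  have hAt : Aᵀ = A := by simpa using hA.isHermitian.eq
  have hux : (A⁻¹ *ᵥ y) ⬝ᵥ A *ᵥ x = x ⬝ᵥ y := by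
    rw [dotProduct_mulVec, ← mulVec_transpose, hAt, hAu, dotProduct_comm]
  -- The quadratic polynomial `t ↦ (x + t A⁻¹ y)ᵀ A (x + t A⁻¹ y)` is nonnegative.
  have hq : ∀ t : ℝ, 0 ≤ (y ⬝ᵥ A⁻¹ *ᵥ y) * (t * t) + (2 * (x ⬝ᵥ y)) * t + x ⬝ᵥ A *ᵥ x := by
    intro t
    have h := hA.posSemidef.dotProduct_mulVec_nonneg (x + t • (A⁻¹ *ᵥ y))
    simp only [star_trivial, mulVec_add, mulVec_smul, hAu, add_dotProduct, dotProduct_add,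
      smul_dotProduct, dotProduct_smul, hux, smul_eq_mul,
      dotProduct_comm (A⁻¹ *ᵥ y) y] at h
    linarith
  have h := discrim_le_zero hq
  simp only [discrim] at h
  linarith

/-- core Cauchy–Schwarz step of Lemma E.2 (Linear Embedding Decoupling). -/
theorem stmt_8 {ι : Type*} [Fintype ι] [Nonempty ι]
    (p : ι → ℝ) (hp0 : ∀ i, 0 ≤ p i) (hp1 : ∑ i, p i = 1)
    (d : ℕ) (hd : 1 ≤ d) (w φ : ι → Fin d → ℝ) (lam : ℝ) (hlam : 0 < lam)
    (S : Matrix (Fin d) (Fin d) ℝ)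
    (hS : S = ∑ j, p j • Matrix.vecMulVec (φ j) (φ j))
    (K : ℝ)
    (hK : K = Matrix.trace ((S + lam • (1 : Matrix (Fin d) (Fin d) ℝ))⁻¹ * S)) :
    ∑ i, p i * |∑ k, w i k * φ i k| ≤
      Real.sqrt ((∑ i, ∑ j, p i * p j * (∑ k, w i k * φ j k) ^ 2 +
          lam * ∑ i, p i * ∑ k, w i k ^ 2) * K) := by
  open Matrix in
  have hSpos : S.PosSemidef := by
    rw [hS]
    refine posSemidef_sum _ fun j _ => PosSemidef.smul ?_ (hp0 j)
    simpa using posSemidef_vecMulVec_self_star (φ j)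
  have hA : (S + lam • (1 : Matrix (Fin d) (Fin d) ℝ)).PosDef :=
    PosDef.posSemidef_add hSpos (PosDef.one.smul hlam)
  have hquad : ∀ i, w i ⬝ᵥ (S + lam • (1 : Matrix (Fin d) (Fin d) ℝ)) *ᵥ w i =
      ∑ j, p j * (∑ k, w i k * φ j k) ^ 2 + lam * ∑ k, w i k ^ 2 := by
    intro i
    have h1 : ∀ v : Fin d → ℝ, w i ⬝ᵥ v = ∑ k, w i k * v k := fun v => rfl
    simp only [hS, add_mulVec, sum_mulVec, smul_mulVec, one_mulVec, dotProduct_add,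
      dotProduct_sum, dotProduct_smul, vecMulVec_mulVec, smul_eq_mul, op_smul_eq_smul,
      dotProduct_comm (φ _) (w i)]
    simp only [h1, ← pow_two]
  set A := S + lam • (1 : Matrix (Fin d) (Fin d) ℝ) with hAdef
  have hK' : K = ∑ i, p i * (φ i ⬝ᵥ A⁻¹ *ᵥ φ i) := by
    rw [hK]
    conv_lhs => rw [hS]
    simp only [Finset.mul_sum, trace_sum, Matrix.mul_smul, trace_smul, mul_vecMulVec,
      trace_vecMulVec, smul_eq_mul, dotProduct_comm]
  have hw0 : ∀ i, 0 ≤ w i ⬝ᵥ A *ᵥ w i := fun i => by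
    simpa using hA.posSemidef.dotProduct_mulVec_nonneg (w i)
  have hφ0 : ∀ i, 0 ≤ φ i ⬝ᵥ A⁻¹ *ᵥ φ i := fun i => by
    simpa using hA.inv.posSemidef.dotProduct_mulVec_nonneg (φ i)
  have hW : ∑ i, ∑ j, p i * p j * (∑ k, w i k * φ j k) ^ 2 + lam * ∑ i, p i * ∑ k, w i k ^ 2
      = ∑ i, p i * (w i ⬝ᵥ A *ᵥ w i) := by
    simp only [hquad, mul_add, Finset.sum_add_distrib, Finset.mul_sum]
    simp only [mul_assoc, mul_left_comm]
  rw [hW, hK', Real.sqrt_mul (Finset.sum_nonneg fun i _ => mul_nonneg (hp0 i) (hw0 i))]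
  refine le_trans (Finset.sum_le_sum fun i _ => ?_)
    (Real.sum_sqrt_mul_sqrt_le Finset.univ (fun i => mul_nonneg (hp0 i) (hw0 i))
      (fun i => mul_nonneg (hp0 i) (hφ0 i)))
  rw [← Real.sqrt_mul (mul_nonneg (hp0 i) (hw0 i))]
  apply Real.le_sqrt_of_sq_le
  have h := mul_le_mul_of_nonneg_left (dotProduct_sq_le_of_posDef hA (w i) (φ i))
    (sq_nonneg (p i))
  rw [mul_pow, sq_abs]
  change p i ^ 2 * (w i ⬝ᵥ φ i) ^ 2 ≤ _
  linarith
end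

section
/- Let ι be a finite nonempty index type, p : ι → ℝ a probability weight function (p i ≥ 0 for all i and ∑ i, p i = 1), d ≥ 1, w φ : ι → (Fin d → ℝ), and λ > 0. Suppose |⟨w i, φ i⟩| ≤ 2 for all i. Let Σ = ∑ j, p j • (outer product of φ j with itself) and K = trace((Σ + λ·I)⁻¹ * Σ). Then ∑ i, p i * ⟨w i, φ i⟩² ≤ 2·sqrt(K * ∑ i, ∑ j, p i * p j * ⟨w i, φ j⟩²) + 2·sqrt(λ * K * ∑ i, p i * ‖w i‖²). -/
/-!
Write `M = S + λ I`, which is positive definite. The Cauchy–Schwarz inequality in the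
`M`-inner product gives `⟨w i, φ i⟩² ≤ a i * b i` with `a i = ⟨w i, M (w i)⟩` and
`b i = ⟨φ i, M⁻¹ (φ i)⟩` (`sq_dotProduct_le_of_posDef`). Averaging against `p`, the `b i` sum to
the effective dimension `K`, and the `a i` sum to the decoupled double expectation plus
`λ ∑ p i ‖w i‖²`. The bound `|⟨w i, φ i⟩| ≤ 2` reduces the square to the absolute value, a second
application of Cauchy–Schwarz (over the index `i`) bounds the mean absolute value by the square
root of the product of these sums, and subadditivity of the square root splits it.
-/

open Matrix in
/-- Cauchy–Schwarz for the norm induced by `M` and its dual norm, induced by `M⁻¹`. -/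
lemma sq_dotProduct_le_of_posDef {n : Type*} [Fintype n] [DecidableEq n]
    {M : Matrix n n ℝ} (hM : M.PosDef) (v f : n → ℝ) :
    (v ⬝ᵥ f) ^ 2 ≤ (v ⬝ᵥ M *ᵥ v) * (f ⬝ᵥ M⁻¹ *ᵥ f) := by
  have hMu : M *ᵥ (M⁻¹ *ᵥ f) = f := by
    rw [mulVec_mulVec, mul_nonsing_inv _ ((isUnit_iff_isUnit_det _).1 hM.isUnit), one_mulVec]
  have hsymm : (M⁻¹ *ᵥ f) ⬝ᵥ M *ᵥ v = v ⬝ᵥ f := by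
    have hT : Mᵀ = M := by simpa using hM.isHermitian.eq
    rw [dotProduct_mulVec, ← mulVec_transpose, hT, hMu, dotProduct_comm]
  -- The quadratic `t ↦ ⟨v + t M⁻¹ f, M (v + t M⁻¹ f)⟩` is nonnegative.
  have hq : ∀ t : ℝ, 0 ≤ (f ⬝ᵥ M⁻¹ *ᵥ f) * (t * t) + (2 * (v ⬝ᵥ f)) * t + v ⬝ᵥ M *ᵥ v := by
    intro t
    have h := hM.posSemidef.dotProduct_mulVec_nonneg (v + t • (M⁻¹ *ᵥ f))
    simp only [star_trivial, mulVec_add, mulVec_smul, hMu, add_dotProduct, dotProduct_add,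
      smul_dotProduct, dotProduct_smul, smul_eq_mul, hsymm,
      dotProduct_comm (M⁻¹ *ᵥ f) f] at h
    linarith
  have hd := discrim_le_zero hq
  rw [discrim] at hd
  linarith

open Matrix in
/-- finite-dimensional content of Lemma E.2 (Linear Embedding Decoupling). -/
theorem stmt_9 {ι : Type*} [Fintype ι] [Nonempty ι]
    (p : ι → ℝ) (hp0 : ∀ i, 0 ≤ p i) (hp1 : ∑ i, p i = 1)
    (d : ℕ) (hd : 1 ≤ d) (w φ : ι → Fin d → ℝ) (lam : ℝ) (hlam : 0 < lam)
    (hbd : ∀ i, |∑ k, w i k * φ i k| ≤ 2)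
    (S : Matrix (Fin d) (Fin d) ℝ)
    (hS : S = ∑ j, p j • Matrix.vecMulVec (φ j) (φ j))
    (K : ℝ)
    (hK : K = Matrix.trace ((S + lam • (1 : Matrix (Fin d) (Fin d) ℝ))⁻¹ * S)) :
    ∑ i, p i * (∑ k, w i k * φ i k) ^ 2 ≤
      2 * Real.sqrt (K * ∑ i, ∑ j, p i * p j * (∑ k, w i k * φ j k) ^ 2) +
        2 * Real.sqrt (lam * K * ∑ i, p i * ∑ k, w i k ^ 2) := by
  have hSpsd : S.PosSemidef := by
    rw [hS]
    exact posSemidef_sum _ fun j _ => (posSemidef_vecMulVec_self_star (φ j)).smul (hp0 j)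
  set M := S + lam • (1 : Matrix (Fin d) (Fin d) ℝ) with hMdef
  have hM : M.PosDef := PosDef.posSemidef_add hSpsd (PosDef.one.smul hlam)
  have hb0 : ∀ i, 0 ≤ φ i ⬝ᵥ M⁻¹ *ᵥ φ i := fun i => by
    simpa using hM.inv.posSemidef.dotProduct_mulVec_nonneg (φ i)
  have ha0 : ∀ i, 0 ≤ w i ⬝ᵥ M *ᵥ w i := fun i => by
    simpa using hM.posSemidef.dotProduct_mulVec_nonneg (w i)
  have hKb : ∑ i, p i * (φ i ⬝ᵥ M⁻¹ *ᵥ φ i) = K := by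
    rw [hK]
    conv_rhs => rw [hS]
    rw [Matrix.mul_sum, trace_sum]
    refine Finset.sum_congr rfl fun i _ => ?_
    rw [mul_smul_comm, trace_smul, mul_vecMulVec, trace_vecMulVec, smul_eq_mul, dotProduct_comm]
  have hK0 : 0 ≤ K := hKb ▸ Finset.sum_nonneg fun i _ => mul_nonneg (hp0 i) (hb0 i)
  have hSw : ∀ v : Fin d → ℝ, v ⬝ᵥ M *ᵥ v =
      ∑ j, p j * (∑ k, v k * φ j k) ^ 2 + lam * ∑ k, v k ^ 2 := by
    intro v
    rw [hMdef, add_mulVec, dotProduct_add, smul_mulVec, one_mulVec, dotProduct_smul, hS,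
      sum_mulVec, dotProduct_sum]
    congr 1
    · refine Finset.sum_congr rfl fun j _ => ?_
      rw [smul_mulVec, vecMulVec_mulVec, dotProduct_smul, dotProduct_smul, dotProduct_comm (φ j) v]
      simp [dotProduct, sq]
    · simp [dotProduct, sq]
  set A := ∑ i, ∑ j, p i * p j * (∑ k, w i k * φ j k) ^ 2 with hA
  set B := ∑ i, p i * ∑ k, w i k ^ 2 with hB
  have hAB : ∑ i, p i * (w i ⬝ᵥ M *ᵥ w i) = A + lam * B := by
    rw [hA, hB, Finset.mul_sum, ← Finset.sum_add_distrib]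
    refine Finset.sum_congr rfl fun i _ => ?_
    rw [hSw, mul_add, Finset.mul_sum]
    simp only [mul_assoc]
    rw [mul_left_comm]
  have hcs : (∑ i, p i * |∑ k, w i k * φ i k|) ^ 2 ≤ (A + lam * B) * K := by
    rw [← hAB, ← hKb]
    refine Finset.sum_sq_le_sum_mul_sum_of_sq_le_mul _
      (fun i _ => mul_nonneg (hp0 i) (ha0 i)) (fun i _ => mul_nonneg (hp0 i) (hb0 i))
      fun i _ => ?_
    have h := mul_le_mul_of_nonneg_left (sq_dotProduct_le_of_posDef hM (w i) (φ i))
      (sq_nonneg (p i))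
    rw [mul_pow, sq_abs]
    calc _ ≤ _ := h
      _ = _ := by ring
  have habs : ∑ i, p i * (∑ k, w i k * φ i k) ^ 2 ≤ 2 * ∑ i, p i * |∑ k, w i k * φ i k| := by
    rw [Finset.mul_sum]
    refine Finset.sum_le_sum fun i _ => ?_
    rw [← sq_abs, mul_left_comm]
    refine mul_le_mul_of_nonneg_left ?_ (hp0 i)
    nlinarith [hbd i, abs_nonneg (∑ k, w i k * φ i k)]
  have hsqrt : √((A + lam * B) * K) ≤ √(K * A) + √(lam * K * B) := by
    rw [show (A + lam * B) * K = K * A + lam * K * B by ring]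
    have hA0 : 0 ≤ K * A := mul_nonneg hK0 <| Finset.sum_nonneg fun i _ =>
      Finset.sum_nonneg fun j _ => mul_nonneg (mul_nonneg (hp0 i) (hp0 j)) (sq_nonneg _)
    have hB0 : 0 ≤ lam * K * B := mul_nonneg (mul_nonneg hlam.le hK0) <|
      Finset.sum_nonneg fun i _ => mul_nonneg (hp0 i) (Finset.sum_nonneg fun k _ => sq_nonneg _)
    refine Real.sqrt_le_iff.2 ⟨by positivity, ?_⟩
    rw [add_sq, Real.sq_sqrt hA0, Real.sq_sqrt hB0]
    linarith [mul_nonneg (Real.sqrt_nonneg (K * A)) (Real.sqrt_nonneg (lam * K * B))]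
  linarith [Real.le_sqrt_of_sq_le hcs]
end

section
/- Let ι be a finite nonempty index type, ρ : ι → ℝ a probability weight function (ρ a ≥ 0 for all a and ∑ a, ρ a = 1), d ≥ 1, φ : ι → (Fin d → ℝ), and D ≥ 0. Let Σ = ∑ a, ρ a • (outer product of φ a with itself), and assume Σ is positive definite and that φ a ᵀ Σ⁻¹ (φ a) ≤ D for all a ∈ ι. Then for every w : Fin d → ℝ and every a ∈ ι, ⟨w, φ a⟩² ≤ D * ∑ a', ρ a' * ⟨w, φ a'⟩². -/
/-!
Put `u = S⁻¹ φ(a)`. Since `xᵀ S y = ∑ ρ(a') ⟨x, φ(a')⟩ ⟨y, φ(a')⟩`, the prediction is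
`⟨w, φ(a)⟩ = wᵀ S u`, the `ρ`-weighted correlation of the predictions of `w` and `u`. The weighted
Cauchy–Schwarz inequality bounds its square by `(wᵀ S w) (uᵀ S u)`, and `uᵀ S u = φ(a)ᵀ S⁻¹ φ(a)`
is the leverage score, at most `D`.
-/

open Matrix in
theorem dotProduct_designMatrix_mulVec {ι : Type*} [Fintype ι] (ρ : ι → ℝ) {d : ℕ}
    (φ : ι → Fin d → ℝ) (x y : Fin d → ℝ) :
    x ⬝ᵥ ((∑ a, ρ a • vecMulVec (φ a) (φ a)) *ᵥ y) =
      ∑ a, ρ a * ((x ⬝ᵥ φ a) * (y ⬝ᵥ φ a)) := by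
  rw [sum_mulVec, dotProduct_sum]
  refine Finset.sum_congr rfl fun a _ => ?_
  rw [smul_mulVec, vecMulVec_mulVec, dotProduct_smul, dotProduct_comm y]
  simp [dotProduct_smul]
  ring_nf
  simp

/-- Lemma I.1 of the paper (Design based decoupling). -/
theorem stmt_10 {ι : Type*} [Fintype ι] [Nonempty ι]
    (ρ : ι → ℝ) (hρ0 : ∀ a, 0 ≤ ρ a) (hρ1 : ∑ a, ρ a = 1)
    (d : ℕ) (hd : 1 ≤ d) (φ : ι → Fin d → ℝ) (D : ℝ) (hD : 0 ≤ D)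
    (S : Matrix (Fin d) (Fin d) ℝ)
    (hS : S = ∑ a, ρ a • Matrix.vecMulVec (φ a) (φ a))
    (hSpd : S.PosDef)
    (hlev : ∀ a, ∑ j, ∑ k, φ a j * S⁻¹ j k * φ a k ≤ D)
    (w : Fin d → ℝ) (a : ι) :
    (∑ k, w k * φ a k) ^ 2 ≤ D * ∑ a', ρ a' * (∑ k, w k * φ a' k) ^ 2 := by
  have hdet : IsUnit S.det := (Matrix.isUnit_iff_isUnit_det S).mp hSpd.isUnit
  obtain ⟨u, hu⟩ : ∃ u, u = S⁻¹.mulVec (φ a) := ⟨_, rfl⟩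
  have hSu : S.mulVec u = φ a := by
    rw [hu, Matrix.mulVec_mulVec, Matrix.mul_nonsing_inv S hdet, Matrix.one_mulVec]
  have key : ∀ x : Fin d → ℝ,
      x ⬝ᵥ φ a = ∑ a', ρ a' * ((x ⬝ᵥ φ a') * (u ⬝ᵥ φ a')) := fun x => by
    rw [← dotProduct_designMatrix_mulVec, ← hS, hSu]
  have hlev' : ∑ a', ρ a' * (u ⬝ᵥ φ a') ^ 2 ≤ D := by
    simp only [sq]
    rw [← key u, dotProduct_comm, hu]
    refine le_trans (le_of_eq ?_) (hlev a)
    simp only [dotProduct, Matrix.mulVec, Finset.mul_sum, mul_assoc]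
  have hcs : (∑ a', ρ a' * ((w ⬝ᵥ φ a') * (u ⬝ᵥ φ a'))) ^ 2 ≤
      (∑ a', ρ a' * (w ⬝ᵥ φ a') ^ 2) * ∑ a', ρ a' * (u ⬝ᵥ φ a') ^ 2 :=
    Finset.sum_sq_le_sum_mul_sum_of_sq_le_mul _
      (fun i _ => mul_nonneg (hρ0 i) (sq_nonneg _))
      (fun i _ => mul_nonneg (hρ0 i) (sq_nonneg _)) (fun i _ => le_of_eq (by ring))
  change (w ⬝ᵥ φ a) ^ 2 ≤ D * ∑ a', ρ a' * (w ⬝ᵥ φ a') ^ 2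
  rw [key w, mul_comm D]
  exact hcs.trans (mul_le_mul_of_nonneg_left hlev'
    (Finset.sum_nonneg fun i _ => mul_nonneg (hρ0 i) (sq_nonneg _)))
end

section
/- Fix N ≥ 1. Define f⋆ : Fin N → Fin 2 → ℝ by f⋆ x 0 = 0 and f⋆ x 1 = 1/2; for each i : Fin N define f_i : Fin N → Fin 2 → ℝ by f_i x a = 1 if (x = i and a = 0) and f_i x a = f⋆ x a otherwise; and for each j : Fin N define the greedy policy π_j : Fin N → Fin 2 by π_j x = 0 if x = j and π_j x = 1 otherwise. Let M : Matrix (Fin N) (Fin N) ℝ be the Bellman-error matrix M i j = (1/N) * ∑_{x : Fin N} (f_i x (π_j x) − f⋆ x (π_j x)). Then M i j = (1/N) if i = j and M i j = 0 otherwise (i.e., M = (1/N) • identity), and the rank of M equals N. -/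
/-! The function `f i` differs from `fstar` only at context `i` and action `0`, where the error
is `1`, and the policy `π j` plays action `0` only at context `j`. Hence the sum defining `M i j`
has a nonzero term exactly when `i = j`, so `M` is `1 / N` times the identity, which is invertible
and therefore of full rank. -/

/-- Q-type Bellman rank lower-bound construction (Appendix B). -/
theorem stmt_11 (N : ℕ) (hN : 1 ≤ N)
    (fstar : Fin N → Fin 2 → ℝ)
    (hfstar : ∀ x : Fin N, fstar x 0 = 0 ∧ fstar x 1 = 1 / 2)
    (f : Fin N → Fin N → Fin 2 → ℝ)
    (hf : ∀ (i x : Fin N) (a : Fin 2),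
      f i x a = if x = i ∧ a = 0 then 1 else fstar x a)
    (π : Fin N → Fin N → Fin 2)
    (hπ : ∀ j x : Fin N, π j x = if x = j then 0 else 1)
    (M : Matrix (Fin N) (Fin N) ℝ)
    (hM : ∀ i j : Fin N,
      M i j = (1 / (N : ℝ)) * ∑ x : Fin N, (f i x (π j x) - fstar x (π j x))) :
    (∀ i j : Fin N, M i j = if i = j then (1 / (N : ℝ)) else 0) ∧
      M = (1 / (N : ℝ)) • (1 : Matrix (Fin N) (Fin N) ℝ) ∧
      M.rank = N := by
  -- The summand vanishes unless `x = i` and `π j x = 0`, i.e. unless `x = i` and `x = j`.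
  have hterm : ∀ i j x : Fin N,
      f i x (π j x) - fstar x (π j x) = if x = i then (if i = j then 1 else 0) else 0 := by
    intro i j x
    rw [hf, hπ]
    by_cases hxi : x = i
    · subst hxi
      by_cases hxj : x = j
      · simp [hxj, (hfstar j).1]
      · simp [hxj]
    · simp [hxi]
  have hentry : ∀ i j : Fin N, M i j = if i = j then (1 / (N : ℝ)) else 0 := by
    intro i j
    rw [hM, Finset.sum_congr rfl fun x _ => hterm i j x]
    simp
  have hsmul : M = (1 / (N : ℝ)) • (1 : Matrix (Fin N) (Fin N) ℝ) := by
    ext i j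
    rw [hentry]
    simp [Matrix.one_apply]
  refine ⟨hentry, hsmul, ?_⟩
  -- `1 ≤ N` makes the scalar `1 / N` nonzero, so `M` is invertible.
  have hN0 : (1 / (N : ℝ)) ≠ 0 := by
    have : (N : ℝ) ≠ 0 := by exact_mod_cast (by omega : N ≠ 0)
    exact one_div_ne_zero this
  have hunit : IsUnit M := by
    rw [hsmul]
    exact isUnit_one.smul (Units.mk0 _ hN0)
  simpa using Matrix.rank_of_isUnit M hunit
end

section
/- Let (Ω, μ) be a probability space and X : Ω → ℝ a measurable function with μ-almost surely |X| ≤ σ (for some σ ≥ 0) and ∫ X dμ = 0. Let e ∈ ℝ and c > 0. Then ∫ exp(c·(e² + 2·X·e)) dμ ≤ exp(c·(1 + 2·c·σ²)·e²) and ∫ exp(−c·(e² + 2·X·e)) dμ ≤ exp(−c·(1 − 2·c·σ²)·e²). -/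
/-!
Each integrand is `exp (a + t * X)` with `a = ± c * e ^ 2` constant and `t = ± 2 * c * e`. Factoring
out `exp a` leaves the moment generating function of `X` at `t`, which Hoeffding's lemma on
`[-σ, σ]` bounds by `exp (σ ^ 2 * t ^ 2 / 2) = exp (2 * c ^ 2 * σ ^ 2 * e ^ 2)`.
-/

open MeasureTheory

/-- exponential-moment bounds of Lemma H.2. -/
theorem stmt_12 {Ω : Type*} [MeasurableSpace Ω] (μ : Measure Ω)
    [IsProbabilityMeasure μ]
    (X : Ω → ℝ) (hX : Measurable X) (σ : ℝ) (hσ : 0 ≤ σ)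
    (hbd : ∀ᵐ ω ∂μ, |X ω| ≤ σ) (hmean : ∫ ω, X ω ∂μ = 0)
    (e c : ℝ) (hc : 0 < c) :
    (∫ ω, Real.exp (c * (e ^ 2 + 2 * X ω * e)) ∂μ ≤
        Real.exp (c * (1 + 2 * c * σ ^ 2) * e ^ 2)) ∧
    (∫ ω, Real.exp (-(c * (e ^ 2 + 2 * X ω * e))) ∂μ ≤
        Real.exp (-(c * (1 - 2 * c * σ ^ 2) * e ^ 2))) := by
  have hoeffding : ∀ t : ℝ, ∫ ω, Real.exp (t * X ω) ∂μ ≤ Real.exp (σ ^ 2 * t ^ 2 / 2) := by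
    intro t
    have hIcc : ∀ᵐ ω ∂μ, X ω ∈ Set.Icc (-σ) σ := by
      filter_upwards [hbd] with ω hω using abs_le.mp hω
    have h := (ProbabilityTheory.hasSubgaussianMGF_of_mem_Icc_of_integral_eq_zero
      hX.aemeasurable hIcc hmean).mgf_le t
    have hcoef : (((‖σ - -σ‖₊ / 2) ^ 2 : NNReal) : ℝ) = σ ^ 2 := by
      push_cast
      rw [Real.norm_eq_abs, div_pow, sq_abs]
      ring
    rwa [hcoef] at h
  have key : ∀ a t : ℝ, ∫ ω, Real.exp (a + t * X ω) ∂μ ≤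
      Real.exp (a + σ ^ 2 * t ^ 2 / 2) := by
    intro a t
    simp_rw [Real.exp_add]
    rw [integral_const_mul]
    exact mul_le_mul_of_nonneg_left (hoeffding t) (Real.exp_pos a).le
  constructor
  · convert key (c * e ^ 2) (2 * c * e) using 3
    · congr 1
      ring
    · ring
  · convert key (-(c * e ^ 2)) (-(2 * c * e)) using 3
    · congr 1
      ring
    · ring
end

section
/- Let (Ω, μ) be a probability space and X : Ω → ℝ a measurable function with μ-almost surely |X| ≤ σ (for some σ ≥ 0) and ∫ X dμ = 0. Let e ∈ ℝ with |e| ≤ 1, and define δ : Ω → ℝ by δ ω = e² + 2·(X ω)·e. Then: (i) −σ² ≤ δ ω ≤ 1 + 2σ for μ-almost every ω; (ii) ∫ δ dμ = e²; and (iii) ∫ δ² dμ ≤ (1 + 4σ²)·e². -/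
/-! Everything follows from pointwise estimates. Completing the square, `δ = (e + X)² - X² ≥ -σ²`.
For the second moment, `δ² = e⁴ + 4e³X + 4X²e²` is almost surely at most
`(1 + 4σ²)e² + 4e³X`, and the linear term integrates to zero. -/

open MeasureTheory

/-- boundedness and moment identities of Lemma H.2. -/
theorem stmt_13 {Ω : Type*} [MeasurableSpace Ω] (μ : Measure Ω)
    [IsProbabilityMeasure μ]
    (X : Ω → ℝ) (hX : Measurable X) (σ : ℝ) (hσ : 0 ≤ σ)
    (hbd : ∀ᵐ ω ∂μ, |X ω| ≤ σ) (hmean : ∫ ω, X ω ∂μ = 0)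
    (e : ℝ) (he : |e| ≤ 1)
    (δ : Ω → ℝ) (hδ : ∀ ω, δ ω = e ^ 2 + 2 * X ω * e) :
    (∀ᵐ ω ∂μ, -σ ^ 2 ≤ δ ω ∧ δ ω ≤ 1 + 2 * σ) ∧
      (∫ ω, δ ω ∂μ = e ^ 2) ∧
      (∫ ω, (δ ω) ^ 2 ∂μ ≤ (1 + 4 * σ ^ 2) * e ^ 2) := by
  have hint : Integrable X μ := Integrable.of_bound hX.aestronglyMeasurable σ hbd
  have he2 : e ^ 2 ≤ 1 := (sq_le_one_iff_abs_le_one e).2 he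
  have haffine (a b : ℝ) : ∫ ω, (a + b * X ω) ∂μ = a := by
    rw [integral_add (integrable_const a) (hint.const_mul b), integral_const_mul, hmean]
    simp
  refine ⟨?_, ?_, ?_⟩
  · filter_upwards [hbd] with ω hω
    rw [hδ]
    have hX2 : X ω ^ 2 ≤ σ ^ 2 := sq_le_sq' (abs_le.1 hω).1 (abs_le.1 hω).2
    have hXe : X ω * e ≤ σ := by
      calc X ω * e ≤ |X ω| * |e| := (le_abs_self _).trans (abs_mul _ _).le
        _ ≤ σ * 1 := mul_le_mul hω he (abs_nonneg e) hσ
        _ = σ := mul_one σ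
    constructor
    · nlinarith [sq_nonneg (e + X ω)]
    · linarith
  · rw [← haffine (e ^ 2) (2 * e)]
    congr 1 with ω
    rw [hδ]
    ring
  · rw [← haffine ((1 + 4 * σ ^ 2) * e ^ 2) (4 * e ^ 3)]
    refine integral_mono_of_nonneg (ae_of_all _ fun ω => sq_nonneg _)
      ((integrable_const _).add (hint.const_mul _)) ?_
    filter_upwards [hbd] with ω hω
    rw [hδ]
    have hX2 : X ω ^ 2 ≤ σ ^ 2 := sq_le_sq' (abs_le.1 hω).1 (abs_le.1 hω).2
    have h1 := mul_le_mul_of_nonneg_right hX2 (sq_nonneg e)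
    have h2 := mul_le_mul_of_nonneg_right he2 (sq_nonneg e)
    nlinarith
end

section
/- Define ψ : ℝ → ℝ by ψ z = (exp z − z − 1)/z² for z ≠ 0 and ψ 0 = 1/2. Let (Ω, μ) be a probability space, B ≥ 0, γ > 0, and D : Ω → ℝ a measurable function with |D| ≤ B μ-almost surely. Then ∫ D dμ − γ·ψ(γ·B)·∫ D² dμ ≤ −(1/γ)·log(∫ exp(−γ·D) dμ) ≤ ∫ D dμ. -/
/-!
The upper bound is Jensen's inequality for `exp`. The lower bound combines `log Z ≤ Z - 1` with
the pointwise estimate `exp z ≤ 1 + z + ψ(b) z²` for `|z| ≤ b` (`exp_le_quadratic_psi`), taken at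
`z = -γ D` and `b = γ B` and integrated. The pointwise estimate is the part of the monotonicity
of `ψ` that is needed, and follows by comparing exponential series term by term.
-/

open MeasureTheory

/-- ψ(z) = (e^z − z − 1)/z², extended by its limit 1/2 at z = 0. -/
noncomputable def psi (z : ℝ) : ℝ :=
  if z = 0 then 1 / 2 else (Real.exp z - z - 1) / z ^ 2

lemma hasSum_exp_sub_sub_one (z : ℝ) :
    HasSum (fun n : ℕ => z ^ (n + 2) / ((n + 2).factorial : ℝ)) (Real.exp z - z - 1) := by
  have h : HasSum (fun n : ℕ => z ^ n / (n.factorial : ℝ)) (Real.exp z) := by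
    rw [Real.exp_eq_exp_ℝ]
    exact NormedSpace.expSeries_div_hasSum_exp z
  have h2 := (hasSum_nat_add_iff' 2).mpr h
  have e : Real.exp z - ∑ i ∈ Finset.range 2, z ^ i / (i.factorial : ℝ) = Real.exp z - z - 1 := by
    simp [Finset.sum_range_succ]
    ring
  rwa [e] at h2

lemma exp_le_quadratic_psi {z b : ℝ} (h : |z| ≤ b) :
    Real.exp z ≤ 1 + z + psi b * z ^ 2 := by
  rcases eq_or_ne b 0 with rfl | hb
  · have hz : z = 0 := abs_nonpos_iff.mp h
    simp [hz]
  have hb2 : 0 < b ^ 2 := by positivity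
  -- Termwise, `b² zⁿ⁺² ≤ z² bⁿ⁺²`, since `zⁿ ≤ bⁿ`.
  have key : b ^ 2 * (Real.exp z - z - 1) ≤ z ^ 2 * (Real.exp b - b - 1) := by
    refine hasSum_le (fun n => ?_) ((hasSum_exp_sub_sub_one z).mul_left (b ^ 2))
      ((hasSum_exp_sub_sub_one b).mul_left (z ^ 2))
    have hn : z ^ n ≤ b ^ n :=
      (le_abs_self _).trans (by rw [abs_pow]; exact pow_le_pow_left₀ (abs_nonneg z) h n)
    calc b ^ 2 * (z ^ (n + 2) / ((n + 2).factorial : ℝ))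
        = b ^ 2 * z ^ 2 / ((n + 2).factorial : ℝ) * z ^ n := by ring
      _ ≤ b ^ 2 * z ^ 2 / ((n + 2).factorial : ℝ) * b ^ n := by gcongr
      _ = z ^ 2 * (b ^ (n + 2) / ((n + 2).factorial : ℝ)) := by ring
  have : Real.exp z - z - 1 ≤ psi b * z ^ 2 := by
    rw [psi, if_neg hb, div_mul_eq_mul_div, le_div_iff₀ hb2]
    linarith
  linarith

/-- sandwich for the soft-min (log-partition) functional (Lemma H.4). -/
theorem stmt_14 {Ω : Type*} [MeasurableSpace Ω] (μ : Measure Ω)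
    [IsProbabilityMeasure μ]
    (B : ℝ) (hB : 0 ≤ B) (γ : ℝ) (hγ : 0 < γ)
    (D : Ω → ℝ) (hD : Measurable D) (hbd : ∀ᵐ ω ∂μ, |D ω| ≤ B) :
    ((∫ ω, D ω ∂μ) - γ * psi (γ * B) * ∫ ω, (D ω) ^ 2 ∂μ ≤
        -(1 / γ) * Real.log (∫ ω, Real.exp (-(γ * D ω)) ∂μ)) ∧
      (-(1 / γ) * Real.log (∫ ω, Real.exp (-(γ * D ω)) ∂μ) ≤ ∫ ω, D ω ∂μ) := by
  have iD : Integrable D μ :=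
    Integrable.of_bound hD.aestronglyMeasurable B (by simpa using hbd)
  have iD2 : Integrable (fun ω => D ω ^ 2) μ := by
    refine Integrable.of_bound (hD.pow_const 2).aestronglyMeasurable (B ^ 2) ?_
    filter_upwards [hbd] with ω h
    rw [norm_pow, Real.norm_eq_abs]
    gcongr
  have iE : Integrable (fun ω => Real.exp (-(γ * D ω))) μ := by
    refine Integrable.of_bound (hD.const_mul γ).neg.exp.aestronglyMeasurable
      (Real.exp (γ * B)) ?_
    filter_upwards [hbd] with ω h
    rw [Real.norm_eq_abs, Real.abs_exp, Real.exp_le_exp, ← mul_neg]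
    gcongr
    exact (neg_le_abs _).trans h
  have jensen : Real.exp (-(γ * ∫ ω, D ω ∂μ)) ≤ ∫ ω, Real.exp (-(γ * D ω)) ∂μ := by
    have := convexOn_exp.map_integral_le (μ := μ) (f := fun ω => -(γ * D ω))
      Real.continuous_exp.continuousOn isClosed_univ (by simp) (iD.const_mul γ).neg iE
    rwa [integral_neg, integral_const_mul] at this
  have hZ : 0 < ∫ ω, Real.exp (-(γ * D ω)) ∂μ := (Real.exp_pos _).trans_le jensen
  have upper : ∫ ω, Real.exp (-(γ * D ω)) ∂μ ≤
      1 - γ * (∫ ω, D ω ∂μ) + psi (γ * B) * γ ^ 2 * ∫ ω, D ω ^ 2 ∂μ := by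
    have i1 : Integrable (fun ω => 1 - γ * D ω) μ := (integrable_const 1).sub (iD.const_mul γ)
    have i2 : Integrable (fun ω => psi (γ * B) * γ ^ 2 * D ω ^ 2) μ := iD2.const_mul _
    calc ∫ ω, Real.exp (-(γ * D ω)) ∂μ
        ≤ ∫ ω, ((1 - γ * D ω) + psi (γ * B) * γ ^ 2 * D ω ^ 2) ∂μ := by
          refine integral_mono_ae iE (i1.add i2) ?_
          filter_upwards [hbd] with ω h
          have hz : |-(γ * D ω)| ≤ γ * B := by
            rw [abs_neg, abs_mul, abs_of_pos hγ]
            gcongr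
          have := exp_le_quadratic_psi hz
          linarith
      _ = _ := by
          rw [integral_add i1 i2, integral_sub (integrable_const 1) (iD.const_mul γ),
            integral_const_mul, integral_const_mul]
          simp
  have hlog := Real.log_le_sub_one_of_pos hZ
  have hlog' := (Real.le_log_iff_exp_le hZ).mpr jensen
  have e (x : ℝ) : -(1 / γ) * x = -x / γ := by ring
  rw [e]
  constructor
  · rw [le_div_iff₀ hγ]
    linarith
  · rw [div_le_iff₀ hγ]
    linarith
end

section
/- Let (Ω, μ) be a probability space, B ≥ 0, and Z : Ω → ℝ a measurable function with 0 ≤ Z ≤ B μ-almost surely. Then log(∫ exp(−Z) dμ) ≤ −exp(−B)·∫ Z dμ and log(∫ exp(Z) dμ) ≤ exp(B)·∫ Z dμ. -/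
/-!
Everything rests on `exp y ≤ 1 + y * exp y`. For `0 ≤ z ≤ B`, taking `y = -z` and `y = z` gives
`exp (-z) ≤ 1 - exp (-B) * z` and `exp z ≤ 1 + exp B * z`. Integrating such an affine bound
against a probability measure and applying `log x ≤ x - 1` gives both inequalities.
-/

open MeasureTheory

lemma exp_le_one_add_mul_exp (y : ℝ) : Real.exp y ≤ 1 + y * Real.exp y := by
  have h := mul_le_mul_of_nonneg_right (Real.add_one_le_exp (-y)) (Real.exp_pos y).le
  rw [← Real.exp_add, neg_add_cancel, Real.exp_zero] at h
  linarith

lemma log_integral_exp_le {Ω : Type*} [MeasurableSpace Ω] (μ : Measure Ω)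
    [IsProbabilityMeasure μ] {Y Z : Ω → ℝ} (c : ℝ) (hY : Measurable Y) (hZ : Integrable Z μ)
    (h : ∀ᵐ ω ∂μ, Real.exp (Y ω) ≤ 1 + c * Z ω) :
    Real.log (∫ ω, Real.exp (Y ω) ∂μ) ≤ c * ∫ ω, Z ω ∂μ := by
  have hr : Integrable (fun ω => 1 + c * Z ω) μ := (integrable_const 1).add (hZ.const_mul c)
  have hl : Integrable (fun ω => Real.exp (Y ω)) μ := by
    refine hr.mono' hY.exp.aestronglyMeasurable ?_
    filter_upwards [h] with ω hω
    rwa [Real.norm_of_nonneg (Real.exp_pos _).le]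
  have hle := integral_mono_ae hl hr h
  rw [integral_add (integrable_const 1) (hZ.const_mul c), integral_const_mul] at hle
  simp only [integral_const, probReal_univ, one_smul] at hle
  have hlog := Real.log_le_sub_one_of_pos (integral_exp_pos hl)
  linarith

/-- log-MGF linearization inequalities (Proposition 6.2's key steps). -/
theorem stmt_16 {Ω : Type*} [MeasurableSpace Ω] (μ : Measure Ω)
    [IsProbabilityMeasure μ]
    (B : ℝ) (hB : 0 ≤ B) (Z : Ω → ℝ) (hZ : Measurable Z)
    (hbd : ∀ᵐ ω ∂μ, 0 ≤ Z ω ∧ Z ω ≤ B) :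
    Real.log (∫ ω, Real.exp (-(Z ω)) ∂μ) ≤ -Real.exp (-B) * ∫ ω, Z ω ∂μ ∧
      Real.log (∫ ω, Real.exp (Z ω) ∂μ) ≤ Real.exp B * ∫ ω, Z ω ∂μ := by
  have hint : Integrable Z μ := by
    refine (integrable_const B).mono' hZ.aestronglyMeasurable ?_
    filter_upwards [hbd] with ω hω
    rw [Real.norm_of_nonneg hω.1]
    exact hω.2
  constructor
  · refine log_integral_exp_le μ _ hZ.neg hint ?_
    filter_upwards [hbd] with ω ⟨h0, h1⟩
    have h := mul_le_mul_of_nonneg_left (Real.exp_le_exp.2 (neg_le_neg h1)) h0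
    have h' := exp_le_one_add_mul_exp (-(Z ω))
    linarith
  · refine log_integral_exp_le μ _ hZ hint ?_
    filter_upwards [hbd] with ω ⟨h0, h1⟩
    have h := mul_le_mul_of_nonneg_left (Real.exp_le_exp.2 h1) h0
    have h' := exp_le_one_add_mul_exp (Z ω)
    linarith
end
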